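/- arXiv:2312.09789 — 5 statements merged into one kernel-verified Lean document; each statement's English description precedes it below -/
import Mathlib

section
/- Let n ≥ 1, 1 ≤ l ≤ n, C_l > 0, C_u > 0, labels yᵢ ∈ {−1,+1} for i = 1,…,l and ground-truth labels yᵢ^{gt} ∈ {−1,+1} for i = l+1,…,n. Define β ∈ ℝⁿ by βᵢ = yᵢ√(2C_l) for i ≤ l and βᵢ = yᵢ^{gt}√(2C_u) for i > l, and define f : ℝⁿ → ℝ by f(z) = ‖z‖² − (zᵀβ)²/(1 + ‖β‖²). Then for every z ∈ ℝⁿ satisfying yᵢ zᵢ ≥ √(2C_l) for all i ≤ l and zᵢ² ≥ 2C_u for all i > l, one has f(z) ≥ f(β) = ‖β‖²/(1 + ‖β‖²). In particular, β is a global minimizer of f over this feasible set (and β itself is feasible). -/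
/-!
By Cauchy–Schwarz, `(zᵀβ)² ≤ ‖z‖²‖β‖²`, so `f z ≥ ‖z‖² / (1 + ‖β‖²)`, with equality at `z = β`.
Both kinds of constraint force `zᵢ² ≥ βᵢ²`, hence `‖z‖² ≥ ‖β‖²` on the feasible set, and
`f z ≥ ‖β‖² / (1 + ‖β‖²) = f β`.
-/

open Matrix

/-- The scaled ideal-kernel S3VM problem: with `βᵢ = yᵢ√(2C_l)` for labeled indices `i < l`
and `βᵢ = yᵢ√(2C_u)` for unlabeled indices `i ≥ l` (where all entries of `y` lie in `{−1,+1}`),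
and `f(z) = ‖z‖² − (zᵀβ)²/(1 + ‖β‖²)`, the point `β` is feasible for the constraints
`yᵢ zᵢ ≥ √(2C_l)` (labeled `i`) and `zᵢ² ≥ 2C_u` (unlabeled `i`), satisfies
`f(β) = ‖β‖²/(1 + ‖β‖²)`, and is a global minimizer of `f` over the feasible set. -/
theorem ideal_kernel_scaled_global_min (n l : ℕ) (hn : 1 ≤ n) (hl : 1 ≤ l) (hln : l ≤ n)
    (Cl Cu : ℝ) (hCl : 0 < Cl) (hCu : 0 < Cu)
    (y : Fin n → ℝ) (hy : ∀ i, y i = -1 ∨ y i = 1)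
    (β : Fin n → ℝ)
    (hβ : ∀ i : Fin n,
      β i = if (i : ℕ) < l then y i * Real.sqrt (2 * Cl) else y i * Real.sqrt (2 * Cu))
    (f : (Fin n → ℝ) → ℝ)
    (hf : ∀ z : Fin n → ℝ, f z = z ⬝ᵥ z - (z ⬝ᵥ β) ^ 2 / (1 + β ⬝ᵥ β)) :
    (∀ i : Fin n, (i : ℕ) < l → y i * β i ≥ Real.sqrt (2 * Cl)) ∧
    (∀ i : Fin n, l ≤ (i : ℕ) → (β i) ^ 2 ≥ 2 * Cu) ∧
    f β = (β ⬝ᵥ β) / (1 + β ⬝ᵥ β) ∧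
    (∀ z : Fin n → ℝ,
      (∀ i : Fin n, (i : ℕ) < l → y i * z i ≥ Real.sqrt (2 * Cl)) →
      (∀ i : Fin n, l ≤ (i : ℕ) → (z i) ^ 2 ≥ 2 * Cu) →
      f z ≥ f β) := by
  have hyy : ∀ i, y i * y i = 1 := fun i => by
    rcases hy i with h | h <;> rw [h] <;> norm_num
  have hsu : Real.sqrt (2 * Cu) ^ 2 = 2 * Cu := Real.sq_sqrt (by positivity)
  have hβl : ∀ i : Fin n, (i : ℕ) < l → β i = y i * Real.sqrt (2 * Cl) := fun i hi => by
    rw [hβ i, if_pos hi]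
  have hβu : ∀ i : Fin n, l ≤ (i : ℕ) → β i ^ 2 = 2 * Cu := fun i hi => by
    rw [hβ i, if_neg (not_lt.mpr hi), mul_pow, hsu, sq, hyy, one_mul]
  have hB : 0 ≤ β ⬝ᵥ β := Finset.sum_nonneg fun i _ => mul_self_nonneg (β i)
  have hB1 : 0 < 1 + β ⬝ᵥ β := by linarith
  have hfβ : f β = (β ⬝ᵥ β) / (1 + β ⬝ᵥ β) := by
    rw [hf]
    field_simp
    ring
  refine ⟨fun i hi => ?_, fun i hi => (hβu i hi).ge, hfβ, fun z hzl hzu => ?_⟩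
  · rw [hβl i hi, ← mul_assoc, hyy, one_mul]
  · have hcoord : ∀ i, β i * β i ≤ z i * z i := fun i => by
      rcases lt_or_ge (i : ℕ) l with hi | hi
      · have h := pow_le_pow_left₀ (Real.sqrt_nonneg _) (hzl i hi) 2
        rw [mul_pow, sq (y i), hyy, one_mul] at h
        rw [hβl i hi, mul_mul_mul_comm, hyy, one_mul, ← sq, ← sq]
        exact h
      · rw [← sq, ← sq, hβu i hi]
        exact hzu i hi
    have hle : β ⬝ᵥ β ≤ z ⬝ᵥ z := Finset.sum_le_sum fun i _ => hcoord i
    have hcs : (z ⬝ᵥ β) ^ 2 ≤ (z ⬝ᵥ z) * (β ⬝ᵥ β) := by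
      simpa only [dotProduct, sq] using Finset.sum_mul_sq_le_sq_mul_sq Finset.univ z β
    rw [hfβ, hf, ge_iff_le, div_le_iff₀ hB1, sub_mul, div_mul_cancel₀ _ hB1.ne']
    linarith
end

section
/- Let n ≥ 1, 1 ≤ l ≤ n, C_l > 0, C_u > 0, and let γ ∈ ℝⁿ satisfy γᵢ ∈ {−1,+1} for all i. Let D be the diagonal n×n matrix with Dᵢᵢ = 1/(2C_l) for i ≤ l and Dᵢᵢ = 1/(2C_u) for i > l. Then γ is a global minimizer of the function v ↦ vᵀ (D + γγᵀ)⁻¹ v over the feasible set {v ∈ ℝⁿ : γᵢ vᵢ ≥ 1 for all i ≤ l, and vᵢ² ≥ 1 for all i > l}, and the optimal value equals γᵀ(D+γγᵀ)⁻¹γ = (γᵀD⁻¹γ)/(1 + γᵀD⁻¹γ). (γ itself is feasible.) -/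
open Matrix

/-!
By Sherman–Morrison, with weights `aᵢ = 1 / Dᵢᵢ > 0` and `S = ∑ aᵢ γᵢ² = ∑ aᵢ`,
`vᵀ (D + γγᵀ)⁻¹ v = ∑ aᵢ vᵢ² - (∑ aᵢ γᵢ vᵢ)² / (1 + S)`.
Cauchy–Schwarz bounds `(∑ aᵢ γᵢ vᵢ)²` by `S ∑ aᵢ vᵢ²`, so the objective is at least
`(∑ aᵢ vᵢ²) / (1 + S)`. Every feasible `v` has `vᵢ² ≥ 1` for all `i`, so this is at least
`S / (1 + S)`, which is the value at `v = γ`.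
-/

/-- The Sherman–Morrison formula for a positive diagonal matrix plus `g gᵀ`, as an identity of
quadratic forms. -/
lemma quadForm_inv_diagonal_add_rankOne {n : ℕ} (d g v : Fin n → ℝ) (hd : ∀ i, 0 < d i) :
    v ⬝ᵥ (diagonal d + vecMulVec g g)⁻¹ *ᵥ v =
      ∑ i, (d i)⁻¹ * v i ^ 2 -
        (∑ i, (d i)⁻¹ * (g i * v i)) ^ 2 / (1 + ∑ i, (d i)⁻¹ * g i ^ 2) := by
  set S : ℝ := ∑ i, (d i)⁻¹ * g i ^ 2 with hS
  have hS0 : 0 ≤ S := Finset.sum_nonneg fun i _ => by have := hd i; positivity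
  have hS1 : 1 + S ≠ 0 := by positivity
  set b : Fin n → ℝ := fun i => (d i)⁻¹ * g i with hb
  have hgb : g ⬝ᵥ b = S := Finset.sum_congr rfl fun i _ => by simp only [hb]; ring
  have hinv : (diagonal d + vecMulVec g g)⁻¹ =
      diagonal (fun i => (d i)⁻¹) - (1 + S)⁻¹ • vecMulVec b b := by
    apply Matrix.inv_eq_right_inv
    have h1 : diagonal d * diagonal (fun i => (d i)⁻¹) = 1 := by
      rw [diagonal_mul_diagonal, ← diagonal_one]
      congr 1
      funext i
      exact mul_inv_cancel₀ (hd i).ne'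
    have h2 : diagonal d * vecMulVec b b = vecMulVec g b := by
      ext i j
      have := (hd i).ne'
      simp only [diagonal_mul, vecMulVec_apply, hb]
      field_simp
    have h3 : vecMulVec g g * diagonal (fun i => (d i)⁻¹) = vecMulVec g b := by
      ext i j
      simp only [mul_diagonal, vecMulVec_apply, hb]
      ring
    have h4 : vecMulVec g g * vecMulVec b b = S • vecMulVec g b := by
      rw [vecMulVec_mul_vecMulVec, hgb]
      ext i j
      simp [vecMulVec_apply]
      ring
    rw [add_mul, mul_sub, mul_sub, mul_smul_comm, mul_smul_comm, h1, h2, h3, h4]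
    ext i j
    simp only [Matrix.add_apply, Matrix.sub_apply, Matrix.smul_apply, smul_eq_mul]
    field_simp
    ring
  have hbv : b ⬝ᵥ v = ∑ i, (d i)⁻¹ * (g i * v i) :=
    Finset.sum_congr rfl fun i _ => by simp only [hb]; ring
  have hdv : v ⬝ᵥ diagonal (fun i => (d i)⁻¹) *ᵥ v = ∑ i, (d i)⁻¹ * v i ^ 2 :=
    Finset.sum_congr rfl fun i _ => by rw [mulVec_diagonal]; ring
  have hvb : v ⬝ᵥ vecMulVec b b *ᵥ v = (b ⬝ᵥ v) ^ 2 := by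
    rw [vecMulVec_mulVec, op_smul_eq_smul, dotProduct_smul, dotProduct_comm v b, smul_eq_mul, sq]
  rw [hinv, sub_mulVec, dotProduct_sub, smul_mulVec, dotProduct_smul, hdv, hvb, hbv, smul_eq_mul]
  ring

/-- Ideal-kernel proposition, first part: with `γᵢ ∈ {−1,+1}` for all `i` and `D` the diagonal
matrix with `Dᵢᵢ = 1/(2C_l)` for labeled indices `i < l` and `Dᵢᵢ = 1/(2C_u)` for unlabeled
indices `i ≥ l`, the vector `γ` is feasible and is a global minimizer of
`v ↦ vᵀ (D + γγᵀ)⁻¹ v` over `{v : γᵢvᵢ ≥ 1 for i < l, vᵢ² ≥ 1 for i ≥ l}`, with optimal value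
`γᵀ(D+γγᵀ)⁻¹γ = (γᵀD⁻¹γ)/(1 + γᵀD⁻¹γ)`. -/
theorem ideal_kernel_global_min (n l : ℕ) (hn : 1 ≤ n) (hl : 1 ≤ l) (hln : l ≤ n)
    (Cl Cu : ℝ) (hCl : 0 < Cl) (hCu : 0 < Cu)
    (γ : Fin n → ℝ) (hγ : ∀ i, γ i = -1 ∨ γ i = 1)
    (D : Matrix (Fin n) (Fin n) ℝ)
    (hD : D = Matrix.diagonal (fun i : Fin n =>
      if (i : ℕ) < l then 1 / (2 * Cl) else 1 / (2 * Cu))) :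
    (∀ i : Fin n, (i : ℕ) < l → γ i * γ i ≥ 1) ∧
    (∀ i : Fin n, l ≤ (i : ℕ) → (γ i) ^ 2 ≥ 1) ∧
    γ ⬝ᵥ (D + vecMulVec γ γ)⁻¹ *ᵥ γ = (γ ⬝ᵥ D⁻¹ *ᵥ γ) / (1 + γ ⬝ᵥ D⁻¹ *ᵥ γ) ∧
    (∀ v : Fin n → ℝ,
      (∀ i : Fin n, (i : ℕ) < l → γ i * v i ≥ 1) →
      (∀ i : Fin n, l ≤ (i : ℕ) → (v i) ^ 2 ≥ 1) →
      v ⬝ᵥ (D + vecMulVec γ γ)⁻¹ *ᵥ v ≥ γ ⬝ᵥ (D + vecMulVec γ γ)⁻¹ *ᵥ γ) := by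
  obtain ⟨d, hd, hDd⟩ : ∃ d : Fin n → ℝ, (∀ i, 0 < d i) ∧ D = diagonal d :=
    ⟨_, fun i => by split_ifs <;> positivity, hD⟩
  have hγ2 : ∀ i, γ i ^ 2 = 1 := fun i => by rcases hγ i with h | h <;> rw [h] <;> norm_num
  set S : ℝ := ∑ i, (d i)⁻¹ with hS
  have hS0 : 0 ≤ S := Finset.sum_nonneg fun i _ => by have := hd i; positivity
  have hform : ∀ v : Fin n → ℝ, v ⬝ᵥ (D + vecMulVec γ γ)⁻¹ *ᵥ v =
      ∑ i, (d i)⁻¹ * v i ^ 2 - (∑ i, (d i)⁻¹ * (γ i * v i)) ^ 2 / (1 + S) := fun v => by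
    rw [hDd, quadForm_inv_diagonal_add_rankOne d γ v hd]
    simp only [hγ2, mul_one, hS]
  have hval : γ ⬝ᵥ (D + vecMulVec γ γ)⁻¹ *ᵥ γ = S / (1 + S) := by
    rw [hform]
    simp only [← sq, hγ2, mul_one, ← hS]
    field_simp
    ring
  have hDinv : γ ⬝ᵥ D⁻¹ *ᵥ γ = S := by
    have h : D⁻¹ = diagonal (fun i => (d i)⁻¹) := by
      rw [hDd]
      apply Matrix.inv_eq_right_inv
      rw [diagonal_mul_diagonal, ← diagonal_one]
      congr 1
      funext i
      exact mul_inv_cancel₀ (hd i).ne'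
    rw [h]
    refine Finset.sum_congr rfl fun i _ => ?_
    rw [mulVec_diagonal]
    linear_combination (d i)⁻¹ * hγ2 i
  refine ⟨fun i _ => by rw [← sq, hγ2], fun i _ => (hγ2 i).ge, by rw [hval, hDinv], ?_⟩
  intro v hlab hunl
  have hv2 : ∀ i, 1 ≤ v i ^ 2 := fun i => by
    rcases lt_or_ge (i : ℕ) l with h | h
    · have h1 := hlab i h
      have h2 : (γ i * v i) ^ 2 = v i ^ 2 := by rw [mul_pow, hγ2, one_mul]
      nlinarith
    · exact hunl i h
  rw [hval, hform]
  set Q : ℝ := ∑ i, (d i)⁻¹ * v i ^ 2 with hQ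
  have hSQ : S ≤ Q := Finset.sum_le_sum fun i _ =>
    le_mul_of_one_le_right (inv_nonneg.2 (hd i).le) (hv2 i)
  have hCS : (∑ i, (d i)⁻¹ * (γ i * v i)) ^ 2 ≤ S * Q := by
    refine Finset.sum_sq_le_sum_mul_sum_of_sq_le_mul _ (fun i _ => inv_nonneg.2 (hd i).le)
      (fun i _ => mul_nonneg (inv_nonneg.2 (hd i).le) (sq_nonneg _)) fun i _ => le_of_eq ?_
    linear_combination (d i)⁻¹ ^ 2 * v i ^ 2 * hγ2 i
  have hpos : 0 < 1 + S := by positivity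
  rw [ge_iff_le, le_sub_iff_add_le, ← add_div, div_le_iff₀ hpos]
  linarith
end

section
/- Let n ≥ 1, 1 ≤ l ≤ n, C_l > 0, C_u > 0, and let γ ∈ ℝⁿ satisfy γᵢ ∈ {−1,+1} for all i. Let D be the diagonal n×n matrix with Dᵢᵢ = 1/(2C_l) for i ≤ l and Dᵢᵢ = 1/(2C_u) for i > l, and set C = (D + γγᵀ)⁻¹. Then for every real symmetric positive semidefinite n×n matrix X with Xᵢᵢ ≥ 1 for all i, one has ⟨C, X⟩ ≥ γᵀ C γ = ⟨C, γγᵀ⟩. In particular, since γγᵀ is positive semidefinite with unit diagonal, the pair (γ, γγᵀ) is an optimal solution of the basic SDP relaxation, i.e., the SDP relaxation is tight for the ideal kernel. -/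
open Matrix

/-!
Put `e = D⁻¹` (as a vector), `w = eγ` and `s = ∑ eᵢ`. By the Sherman–Morrison formula
`C = diag(e) - (1 + s)⁻¹ w wᵀ` (`inv_diagonal_add_vecMulVec`), so that
`⟨C, X⟩ = ∑ eᵢ Xᵢᵢ - (1 + s)⁻¹ wᵀ X w` and `γᵀ C γ = s / (1 + s)`.
For `X` positive semidefinite, `γᵢ γⱼ Xᵢⱼ ≤ (Xᵢᵢ + Xⱼⱼ) / 2`, and weighting by `eᵢ eⱼ` gives
`wᵀ X w ≤ s ∑ eᵢ Xᵢᵢ` (`quadForm_le`). Hence `⟨C, X⟩ ≥ (1 + s)⁻¹ ∑ eᵢ Xᵢᵢ ≥ s / (1 + s)`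
as soon as the diagonal entries of `X` are at least `1`.
-/

/-- The Sherman–Morrison formula for `diag(e)⁻¹ + γγᵀ`, where `γ` has entries `±1`. -/
lemma inv_diagonal_add_vecMulVec {n : ℕ} (e γ : Fin n → ℝ) (he : ∀ i, 0 < e i)
    (hγ : ∀ i, γ i * γ i = 1) :
    (diagonal (fun i => (e i)⁻¹) + vecMulVec γ γ)⁻¹ =
      diagonal e - (1 + ∑ i, e i)⁻¹ • vecMulVec (fun i => e i * γ i) (fun i => e i * γ i) := by
  have hs : 0 < 1 + ∑ i, e i := add_pos_of_pos_of_nonneg one_pos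
    (Finset.sum_nonneg fun i _ => (he i).le)
  apply inv_eq_right_inv
  have h1 : diagonal (fun i => (e i)⁻¹) * diagonal e = 1 := by
    rw [diagonal_mul_diagonal, ← diagonal_one]
    congr 1
    ext i
    exact inv_mul_cancel₀ (he i).ne'
  have h2 : vecMulVec γ γ * diagonal e = vecMulVec γ (fun i => e i * γ i) := by
    ext i j
    simp only [mul_diagonal, vecMulVec_apply]
    ring
  have h3 : diagonal (fun i => (e i)⁻¹) * vecMulVec (fun i => e i * γ i) (fun i => e i * γ i) =
      vecMulVec γ (fun i => e i * γ i) := by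
    ext i j
    have := (he i).ne'
    simp only [diagonal_mul, vecMulVec_apply]
    field_simp
  have h4 : vecMulVec γ γ * vecMulVec (fun i => e i * γ i) (fun i => e i * γ i) =
      (∑ i, e i) • vecMulVec γ (fun i => e i * γ i) := by
    ext i j
    simp only [mul_apply, vecMulVec_apply, Matrix.smul_apply, smul_eq_mul, Finset.sum_mul]
    refine Finset.sum_congr rfl fun k _ => ?_
    linear_combination (γ i * e k * (e j * γ j)) * hγ k
  rw [mul_sub, add_mul, h1, h2, mul_smul_comm, add_mul, h3, h4]
  ext i j
  simp only [Matrix.sub_apply, Matrix.add_apply, Matrix.smul_apply, smul_eq_mul]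
  field_simp
  ring

/-- Positive semidefiniteness of the principal `2 × 2` minor, tested at `(γᵢ, -γⱼ)`. -/
lemma sign_mul_entry_le {n : ℕ} {X : Matrix (Fin n) (Fin n) ℝ} (hX : X.PosSemidef)
    (γ : Fin n → ℝ) (hγ : ∀ i, γ i * γ i = 1) (i j : Fin n) :
    γ i * γ j * X i j ≤ (X i i + X j j) / 2 := by
  have h := hX.dotProduct_mulVec_nonneg (Pi.single i (γ i) - Pi.single j (γ j))
  have hs : X j i = X i j := by simpa using hX.1.apply i j
  simp only [star_trivial, mulVec_sub, sub_dotProduct, dotProduct_sub, single_dotProduct,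
    mulVec_single, Pi.smul_apply, col_apply, MulOpposite.smul_eq_mul_unop,
    MulOpposite.unop_op, hs] at h
  linear_combination h / 2 + X i i / 2 * hγ i + X j j / 2 * hγ j

lemma quadForm_le {n : ℕ} {X : Matrix (Fin n) (Fin n) ℝ} (hX : X.PosSemidef)
    (e γ : Fin n → ℝ) (he : ∀ i, 0 < e i) (hγ : ∀ i, γ i * γ i = 1) :
    ∑ i, ∑ j, X i j * (e i * γ i * (e j * γ j)) ≤ (∑ i, e i) * ∑ i, e i * X i i := by
  have h1 : ∑ i, ∑ j, X i j * (e i * γ i * (e j * γ j)) ≤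
      ∑ i, ∑ j, (e i * (e j * X j j) + e i * X i i * e j) / 2 := by
    refine Finset.sum_le_sum fun i _ => Finset.sum_le_sum fun j _ => ?_
    have := mul_le_mul_of_nonneg_left (sign_mul_entry_le hX γ hγ i j)
      (mul_pos (he i) (he j)).le
    linear_combination this
  refine h1.trans_eq ?_
  simp only [← Finset.sum_div, Finset.sum_add_distrib, ← Finset.sum_mul_sum]
  ring

/-- The trace inner product with the Sherman–Morrison form of `C`. -/
lemma trace_inner_shermanMorrison {n : ℕ} (X : Matrix (Fin n) (Fin n) ℝ) (e w : Fin n → ℝ)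
    (t : ℝ) :
    (Xᵀ * (diagonal e - t • vecMulVec w w)).trace =
      ∑ i, e i * X i i - t * ∑ i, ∑ j, X i j * (w i * w j) := by
  rw [mul_sub, trace_sub, mul_smul_comm, trace_smul, smul_eq_mul]
  congr 2
  · simp [trace, mul_diagonal, mul_comm]
  · simp only [trace, diag_apply, mul_apply, transpose_apply, vecMulVec_apply]
    exact Finset.sum_comm

/-- Tightness of the basic SDP relaxation for the ideal kernel: with `γᵢ ∈ {−1,+1}`, `D` the
diagonal matrix with entries `1/(2C_l)` (labeled indices `i < l`) and `1/(2C_u)` (unlabeled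
indices `i ≥ l`), and `C = (D + γγᵀ)⁻¹`, the matrix `γγᵀ` is positive semidefinite with unit
diagonal, `γᵀCγ = ⟨C, γγᵀ⟩` (trace inner product), and every real symmetric positive
semidefinite `X` with `Xᵢᵢ ≥ 1` for all `i` satisfies `⟨C, X⟩ ≥ γᵀCγ`. -/
theorem ideal_kernel_sdp_tight (n l : ℕ) (hn : 1 ≤ n) (hl : 1 ≤ l) (hln : l ≤ n)
    (Cl Cu : ℝ) (hCl : 0 < Cl) (hCu : 0 < Cu)
    (γ : Fin n → ℝ) (hγ : ∀ i, γ i = -1 ∨ γ i = 1)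
    (D : Matrix (Fin n) (Fin n) ℝ)
    (hD : D = Matrix.diagonal (fun i : Fin n =>
      if (i : ℕ) < l then 1 / (2 * Cl) else 1 / (2 * Cu)))
    (C : Matrix (Fin n) (Fin n) ℝ) (hC : C = (D + vecMulVec γ γ)⁻¹) :
    (vecMulVec γ γ).PosSemidef ∧
    (∀ i : Fin n, vecMulVec γ γ i i = 1) ∧
    γ ⬝ᵥ C *ᵥ γ = ((vecMulVec γ γ)ᵀ * C).trace ∧
    (∀ X : Matrix (Fin n) (Fin n) ℝ, X.PosSemidef → (∀ i, 1 ≤ X i i) →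
      (Xᵀ * C).trace ≥ γ ⬝ᵥ C *ᵥ γ) := by
  have hγ2 : ∀ i, γ i * γ i = 1 := fun i => by rcases hγ i with h | h <;> simp [h]
  have hquad : γ ⬝ᵥ C *ᵥ γ = ((vecMulVec γ γ)ᵀ * C).trace := by
    rw [transpose_vecMulVec, vecMulVec_mul, trace_vecMulVec, dotProduct_mulVec,
      dotProduct_comm]
  refine ⟨by simpa using posSemidef_vecMulVec_self_star γ, fun i => hγ2 i, hquad, ?_⟩
  intro X hX hd
  rw [hquad]
  obtain ⟨e, he, hDe⟩ : ∃ e : Fin n → ℝ, (∀ i, 0 < e i) ∧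
      D = diagonal (fun i => (e i)⁻¹) := by
    refine ⟨fun i => if (i : ℕ) < l then 2 * Cl else 2 * Cu, fun i => ?_, ?_⟩
    · dsimp only
      split_ifs <;> positivity
    · rw [hD]
      congr 1
      ext i
      dsimp only
      split_ifs <;> rw [one_div]
  rw [hC, hDe, inv_diagonal_add_vecMulVec e γ he hγ2,
    trace_inner_shermanMorrison, trace_inner_shermanMorrison]
  have hq := quadForm_le hX e γ he hγ2
  have hS : ∑ i, e i ≤ ∑ i, e i * X i i :=
    Finset.sum_le_sum fun i _ => le_mul_of_one_le_right (he i).le (hd i)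
  have h0 : ∑ i, e i * vecMulVec γ γ i i = ∑ i, e i := by
    simp [vecMulVec_apply, hγ2]
  -- Equality holds in `quadForm_le` at `X = γγᵀ`.
  have h1 : ∑ i, ∑ j, vecMulVec γ γ i j * (e i * γ i * (e j * γ j)) =
      (∑ i, e i) * ∑ i, e i := by
    rw [Finset.sum_mul_sum]
    refine Finset.sum_congr rfl fun i _ => Finset.sum_congr rfl fun j _ => ?_
    rw [vecMulVec_apply]
    linear_combination e i * e j * γ j * γ j * hγ2 i + e i * e j * hγ2 j
  rw [h0, h1]
  have hs0 : 0 ≤ ∑ i, e i := Finset.sum_nonneg fun i _ => (he i).le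
  generalize ∑ i, e i = s at *
  generalize ∑ i, e i * X i i = T at *
  generalize ∑ i, ∑ j, X i j * (e i * γ i * (e j * γ j)) = Q at *
  have ht : 0 < (1 + s)⁻¹ := by positivity
  have hts : (1 + s)⁻¹ * (1 + s) = 1 := inv_mul_cancel₀ (by positivity)
  have h2 := mul_le_mul_of_nonneg_left hq ht.le
  have h3 := mul_le_mul_of_nonneg_left hS ht.le
  -- `T - (1 + s)⁻¹ Q ≥ T - (1 + s)⁻¹ s T = (1 + s)⁻¹ T ≥ (1 + s)⁻¹ s = s - (1 + s)⁻¹ s²`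
  linear_combination h2 + h3 + (T - s) * hts
end

section
/- Let n ≥ 2, 1 ≤ l < n, labels yᵢ ∈ {−1,+1} for i ≤ l, C a real symmetric positive semidefinite n×n matrix, and L, U ∈ ℝⁿ such that for every labeled index i ≤ l: yᵢ = 1 implies Lᵢ ≥ 1 and yᵢ = −1 implies Uᵢ ≤ −1. Define F_box = {(x, X) ∈ ℝⁿ × Sⁿ : Lᵢ ≤ xᵢ ≤ Uᵢ and 1 ≤ Xᵢᵢ ≤ max{Lᵢ², Uᵢ²} for all i, (1/(n−l)) Σ_{i>l} xᵢ = (1/l) Σ_{i≤l} yᵢ, and [[X, x],[xᵀ, 1]] positive semidefinite}, and F_basic = {(v, V) ∈ ℝⁿ × Sⁿ : yᵢvᵢ ≥ 1 for all i ≤ l, Vᵢᵢ ≥ 1 for all i, and [[V, v],[vᵀ, 1]] positive semidefinite}. Then F_box ⊆ F_basic; consequently, if F_box is nonempty, then inf{⟨C, X⟩ : (x, X) ∈ F_box} ≥ inf{⟨C, V⟩ : (v, V) ∈ F_basic}, i.e., the box-constrained SDP relaxation provides a lower bound at least as strong as the basic SDP relaxation. -/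
/-!
The box constraints force `yᵢ xᵢ ≥ 1` at each labeled index: `xᵢ ≥ Lᵢ ≥ 1` if `yᵢ = 1`, and
`xᵢ ≤ Uᵢ ≤ -1` if `yᵢ = -1`. The other basic constraints are among the box ones, so the feasible
sets are nested. The infima then compare by monotonicity, since the objective is bounded below by `0`
on the basic set: `X` is a principal submatrix of the lifted block, hence positive semidefinite, and
the trace of a product of two positive semidefinite matrices is nonnegative
(`trace_mul_nonneg_of_posSemidef`).
-/

open Matrix Finset

/-- The `(n+1)×(n+1)` block matrix `[[X, x],[xᵀ, 1]]`. -/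
noncomputable def liftedBlock {n : ℕ} (x : Fin n → ℝ) (X : Matrix (Fin n) (Fin n) ℝ) :
    Matrix (Fin n ⊕ Fin 1) (Fin n ⊕ Fin 1) ℝ :=
  Matrix.fromBlocks X (Matrix.of fun i (_ : Fin 1) => x i)
    (Matrix.of fun (_ : Fin 1) j => x j) 1

open scoped MatrixOrder Matrix.Norms.L2Operator in
/-- Writing `B = DᴴD`, cyclicity of the trace turns `trace (A B)` into the trace of the positive
semidefinite matrix `D A Dᴴ`. -/
lemma trace_mul_nonneg_of_posSemidef {n : ℕ} {A B : Matrix (Fin n) (Fin n) ℝ}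
    (hA : A.PosSemidef) (hB : B.PosSemidef) : 0 ≤ (A * B).trace := by
  obtain ⟨D, rfl⟩ := CStarAlgebra.nonneg_iff_eq_star_mul_self.mp hB.nonneg
  rw [star_eq_conjTranspose, ← Matrix.mul_assoc, Matrix.trace_mul_comm, ← Matrix.mul_assoc]
  exact (hA.mul_mul_conjTranspose_same D).trace_nonneg

/-- Proposition 1 of the paper: the feasible set of the box-constrained SDP relaxation is
contained in the feasible set of the basic SDP relaxation; consequently (if the former is
nonempty) the corresponding infimum of `⟨C, X⟩ = trace(XᵀC)` over the box-constrained set is at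
least the infimum over the basic set, i.e. the box-constrained SDP relaxation gives a lower
bound at least as strong as the basic one. -/
theorem box_sdp_stronger_than_basic_sdp (n l : ℕ) (hn : 2 ≤ n) (hl : 1 ≤ l) (hln : l < n)
    (y : Fin n → ℝ) (hy : ∀ i : Fin n, (i : ℕ) < l → y i = -1 ∨ y i = 1)
    (C : Matrix (Fin n) (Fin n) ℝ) (hC : C.PosSemidef)
    (L U : Fin n → ℝ)
    (hLU : ∀ i : Fin n, (i : ℕ) < l → (y i = 1 → 1 ≤ L i) ∧ (y i = -1 → U i ≤ -1))
    (Fbox Fbasic : Set ((Fin n → ℝ) × Matrix (Fin n) (Fin n) ℝ))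
    (hFbox : Fbox = {p | p.2.IsSymm ∧
      (∀ i : Fin n, L i ≤ p.1 i ∧ p.1 i ≤ U i) ∧
      (∀ i : Fin n, 1 ≤ p.2 i i ∧ p.2 i i ≤ max ((L i) ^ 2) ((U i) ^ 2)) ∧
      (1 / ((n : ℝ) - (l : ℝ))) * ∑ i ∈ univ.filter (fun i : Fin n => l ≤ (i : ℕ)), p.1 i =
        (1 / (l : ℝ)) * ∑ i ∈ univ.filter (fun i : Fin n => (i : ℕ) < l), y i ∧
      (liftedBlock p.1 p.2).PosSemidef})
    (hFbasic : Fbasic = {p | p.2.IsSymm ∧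
      (∀ i : Fin n, (i : ℕ) < l → y i * p.1 i ≥ 1) ∧
      (∀ i : Fin n, 1 ≤ p.2 i i) ∧
      (liftedBlock p.1 p.2).PosSemidef}) :
    Fbox ⊆ Fbasic ∧
    (Fbox.Nonempty →
      sInf ((fun p : (Fin n → ℝ) × Matrix (Fin n) (Fin n) ℝ => ((p.2)ᵀ * C).trace) '' Fbasic) ≤
      sInf ((fun p : (Fin n → ℝ) × Matrix (Fin n) (Fin n) ℝ => ((p.2)ᵀ * C).trace) '' Fbox)) := by
  have hsub : Fbox ⊆ Fbasic := by
    subst hFbox hFbasic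
    rintro p ⟨hsymm, hbox, hdiag, -, hpsd⟩
    refine ⟨hsymm, fun i hi => ?_, fun i => (hdiag i).1, hpsd⟩
    obtain ⟨hL, hU⟩ := hLU i hi
    rcases hy i hi with h | h
    · have h1 := hU h
      have h2 := (hbox i).2
      rw [h]
      linarith
    · have h1 := hL h
      have h2 := (hbox i).1
      rw [h]
      linarith
  refine ⟨hsub, fun hne => csInf_le_csInf ?_ (hne.image _) (Set.image_mono hsub)⟩
  -- Boundedness below is needed because `sInf` of an unbounded set of reals is the junk value `0`.
  refine ⟨0, ?_⟩
  rintro _ ⟨p, hp, rfl⟩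
  rw [hFbasic] at hp
  obtain ⟨hsymm, -, -, hpsd⟩ := hp
  have hX : p.2.PosSemidef := hpsd.submatrix Sum.inl
  simpa only [hsymm.eq] using trace_mul_nonneg_of_posSemidef hX hC
end

section
/- Let C be a real symmetric n×n matrix, λ > 0, LB ≤ UB and γ real numbers with p := γ − (UB − LB)/λ ≥ 1, let i be an index, and let x ∈ ℝⁿ satisfy the Lagrangian lower bound xᵀCx + λ(xᵢ² − γ) ≥ LB and xᵀCx ≤ UB. Then xᵢ² ≥ p, and moreover: (i) if xᵢ ≥ Lᵢ for some real Lᵢ > −√p, then xᵢ ≥ √p; (ii) if xᵢ ≤ Uᵢ for some real Uᵢ < √p, then xᵢ ≤ −√p. -/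
open Matrix

/-- Marginals-based bound tightening (second lemma): if the Lagrangian lower bound
`xᵀCx + λ(xᵢ² − γ) ≥ LB` holds and `xᵀCx ≤ UB` with `λ > 0`, `LB ≤ UB`, and
`p = γ − (UB − LB)/λ ≥ 1`, then `xᵢ² ≥ p`; moreover (i) if `xᵢ ≥ Lᵢ` for some `Lᵢ > −√p`,
then `xᵢ ≥ √p`, and (ii) if `xᵢ ≤ Uᵢ` for some `Uᵢ < √p`, then `xᵢ ≤ −√p`. -/
theorem marginals_bound_tightening_diag_upper (n : ℕ)
    (C : Matrix (Fin n) (Fin n) ℝ) (hC : C.IsSymm)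
    (lam LB UB γ : ℝ) (hlam : 0 < lam) (hLU : LB ≤ UB)
    (p : ℝ) (hp : p = γ - (UB - LB) / lam) (hp1 : 1 ≤ p)
    (i : Fin n) (x : Fin n → ℝ)
    (h1 : x ⬝ᵥ C *ᵥ x + lam * ((x i) ^ 2 - γ) ≥ LB)
    (h2 : x ⬝ᵥ C *ᵥ x ≤ UB) :
    (x i) ^ 2 ≥ p ∧
    (∀ Li : ℝ, -Real.sqrt p < Li → Li ≤ x i → Real.sqrt p ≤ x i) ∧
    (∀ Ui : ℝ, Ui < Real.sqrt p → x i ≤ Ui → x i ≤ -Real.sqrt p) := by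
  -- Chaining the two bounds on `xᵀCx` gives `lam * (γ - xᵢ²) ≤ UB - LB`; divide by `lam > 0`.
  have hgap : γ - (x i) ^ 2 ≤ (UB - LB) / lam := by
    rw [le_div_iff₀ hlam]
    linarith
  have hsq : p ≤ (x i) ^ 2 := by linarith
  -- `xᵢ² ≥ p` leaves only the two branches `xᵢ ≥ √p` and `xᵢ ≤ -√p`; each bound excludes one.
  have habs : Real.sqrt p ≤ |x i| := Real.sqrt_le_iff.mpr ⟨abs_nonneg _, by rwa [sq_abs]⟩
  refine ⟨hsq, fun Li hLi hx => ?_, fun Ui hUi hx => ?_⟩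
  · rcases le_abs.mp habs with h | h <;> linarith
  · rcases le_abs.mp habs with h | h <;> linarith
end
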